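/- Let d ≥ 1 and let α = (α_1,…,α_d) be a multi-index with α_j > −1 for each j. For every t > 0 and every x ∈ (0,∞)^d, the Poisson–Laguerre kernel has total mass one: ∫_{(0,∞)^d} p_t^α(x,y) dy = 1 (i.e., P_t^α 1 = 1). -/

import Mathlib

open MeasureTheory Real Set

noncomputable def besselI (ν z : ℝ) : ℝ :=
  ∑' m : ℕ, (z / 2) ^ (2 * (m : ℝ) + ν) / (Nat.factorial m * Real.Gamma ((m : ℝ) + ν + 1))

/-- The positive orthant `(0,∞)^d`. -/
def posOrthant (d : ℕ) : Set (Fin d → ℝ) := Set.univ.pi fun _ => Set.Ioi 0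

/-- The Poisson–Laguerre kernel `p_t^α(x,y)`. -/
noncomputable def plKernel (d : ℕ) (α : Fin d → ℝ) (t : ℝ) (x y : Fin d → ℝ) : ℝ :=
  (1 / (2 * Real.sqrt π)) *
    ∫ r in Set.Ioo (0 : ℝ) 1,
      (t * Real.exp (t ^ 2 / (4 * Real.log r)) /
          ((1 - r) ^ d * (-Real.log r) ^ ((3 : ℝ) / 2))) *
        (∏ j, (y j / x j) ^ (α j / 2) *
            Real.exp (-((r * x j + y j) / (1 - r)) - α j * Real.log r / 2) *
            besselI (α j) (2 * Real.sqrt (r * x j * y j) / (1 - r))) / r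

/-- The Poisson–Laguerre semigroup `P_t^α f`, with the convention `P_0^α f = f`. -/
noncomputable def plP (d : ℕ) (α : Fin d → ℝ) (t : ℝ)
    (f : (Fin d → ℝ) → ℝ) (x : Fin d → ℝ) : ℝ :=
  if t = 0 then f x else ∫ y in posOrthant d, plKernel d α t x y * f y

/-- The `m`-th term of the expansion of the one-dimensional Laguerre heat kernel obtained from
the series of the Bessel function. -/
noncomputable def laguerreTerm (a x r y : ℝ) (m : ℕ) : ℝ :=
  exp (-(r * x / (1 - r))) *
    ((r * x) ^ m * (1 - r) ^ (-(2 * (m : ℝ) + a)) / (m.factorial * Gamma (m + a + 1))) *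
      (y ^ ((m : ℝ) + a) * exp (-(1 / (1 - r) * y)))

/-- The one-dimensional Laguerre heat kernel as an extended nonnegative series. -/
noncomputable def laguerreSeries (a x r y : ℝ) : ENNReal :=
  ∑' m : ℕ, ENNReal.ofReal (laguerreTerm a x r y m)

lemma gamma_index_pos {a : ℝ} (ha : -1 < a) (m : ℕ) : 0 < (m : ℝ) + a + 1 := by
  have : (0 : ℝ) ≤ m := m.cast_nonneg
  linarith

lemma laguerreTerm_nonneg {a x r y : ℝ} (ha : -1 < a) (hx : 0 < x) (hr : r ∈ Ioo (0 : ℝ) 1)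
    (hy : 0 < y) (m : ℕ) : 0 ≤ laguerreTerm a x r y m := by
  have h1 : 0 < 1 - r := sub_pos.2 hr.2
  have h0 := hr.1
  have := Gamma_pos_of_pos (gamma_index_pos ha m)
  unfold laguerreTerm
  positivity

lemma measurable_laguerreSeries (a x : ℝ) :
    Measurable fun p : ℝ × ℝ => laguerreSeries a x p.1 p.2 := by
  unfold laguerreSeries laguerreTerm
  exact Measurable.tsum fun m => by fun_prop

lemma measurable_laguerreSeries_right (a x r : ℝ) : Measurable (laguerreSeries a x r) := by
  unfold laguerreSeries laguerreTerm
  exact Measurable.tsum fun m => by fun_prop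

/-- The one-dimensional Laguerre heat kernel agrees with its series. -/
lemma laguerre_kernel_eq_toReal {a x r y : ℝ} (ha : -1 < a) (hx : 0 < x)
    (hr : r ∈ Ioo (0 : ℝ) 1) (hy : 0 < y) :
    (y / x) ^ (a / 2) * exp (-((r * x + y) / (1 - r)) - a * log r / 2) *
      besselI a (2 * √(r * x * y) / (1 - r)) = (laguerreSeries a x r y).toReal := by
  have h1 : 0 < 1 - r := sub_pos.2 hr.2
  have h0 := hr.1
  rw [laguerreSeries, ENNReal.tsum_toReal_eq fun _ => ENNReal.ofReal_ne_top, besselI,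
    ← tsum_mul_left]
  refine tsum_congr fun m => ?_
  rw [ENNReal.toReal_ofReal (laguerreTerm_nonneg ha hx hr hy m), laguerreTerm]
  have hz : 2 * √(r * x * y) / (1 - r) / 2 = (r * x * y) ^ (1 / 2 : ℝ) / (1 - r) := by
    rw [sqrt_eq_rpow]; ring
  have hr' : exp (-((r * x + y) / (1 - r)) - a * log r / 2) =
      exp (-(r * x / (1 - r))) * exp (-(1 / (1 - r) * y)) * r ^ (-(a / 2)) := by
    rw [rpow_def_of_pos h0, ← exp_add, ← exp_add]
    congr 1
    ring
  have hpow : (y / x) ^ (a / 2) * r ^ (-(a / 2)) *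
      ((r * x * y) ^ (1 / 2 : ℝ) / (1 - r)) ^ (2 * (m : ℝ) + a) =
      (r * x) ^ m * (1 - r) ^ (-(2 * (m : ℝ) + a)) * y ^ ((m : ℝ) + a) := by
    rw [← rpow_natCast (r * x) m]
    simp only [rpow_def_of_pos (div_pos hy hx), rpow_def_of_pos h0, rpow_def_of_pos hy,
      rpow_def_of_pos h1, rpow_def_of_pos (mul_pos h0 hx),
      rpow_def_of_pos (mul_pos (mul_pos h0 hx) hy), rpow_def_of_pos (div_pos (exp_pos _) h1)]
    rw [log_div (exp_pos _).ne' h1.ne', log_exp, log_div hy.ne' hx.ne',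
      log_mul (mul_pos h0 hx).ne' hy.ne', log_mul h0.ne' hx.ne']
    simp only [← exp_add]
    congr 1
    ring
  rw [hz, hr', mul_div_assoc']
  rw [show (y / x) ^ (a / 2) * (exp (-(r * x / (1 - r))) * exp (-(1 / (1 - r) * y)) *
      r ^ (-(a / 2))) * ((r * x * y) ^ (1 / 2 : ℝ) / (1 - r)) ^ (2 * (m : ℝ) + a) =
      exp (-(r * x / (1 - r))) * exp (-(1 / (1 - r) * y)) * ((y / x) ^ (a / 2) * r ^ (-(a / 2)) *
      ((r * x * y) ^ (1 / 2 : ℝ) / (1 - r)) ^ (2 * (m : ℝ) + a)) by ring, hpow]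
  ring

lemma lintegral_laguerreTerm {a x r : ℝ} (ha : -1 < a) (hx : 0 < x)
    (hr : r ∈ Ioo (0 : ℝ) 1) (m : ℕ) :
    ∫⁻ y in Ioi 0, ENNReal.ofReal (laguerreTerm a x r y m) =
      ENNReal.ofReal ((1 - r) * exp (-(r * x / (1 - r))) *
        ((r * x / (1 - r)) ^ m / m.factorial)) := by
  have h1 : 0 < 1 - r := sub_pos.2 hr.2
  have h0 := hr.1
  have hm := gamma_index_pos ha m
  have hint : IntegrableOn (fun y => laguerreTerm a x r y m) (Ioi 0) := by
    have := integrableOn_rpow_mul_exp_neg_mul_rpow (p := 1) (s := m + a) (b := 1 / (1 - r))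
      (by linarith) one_pos (by positivity)
    simp only [rpow_one, neg_mul] at this
    exact this.const_mul _
  rw [← ofReal_integral_eq_lintegral_ofReal hint
    ((ae_restrict_iff' measurableSet_Ioi).2 (.of_forall fun y hy =>
      laguerreTerm_nonneg ha hx hr hy m))]
  congr 1
  have hG := integral_rpow_mul_exp_neg_mul_Ioi (a := m + a + 1) (r := 1 / (1 - r)) hm
    (by positivity)
  simp only [add_sub_cancel_right, one_div_one_div] at hG
  unfold laguerreTerm
  rw [integral_const_mul, hG]
  have hp : (1 - r) ^ (-(2 * (m : ℝ) + a)) * (1 - r) ^ ((m : ℝ) + a + 1) =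
      (1 - r) / (1 - r) ^ m := by
    rw [← rpow_add h1, ← rpow_natCast (1 - r) m,
      show -(2 * (m : ℝ) + a) + (m + a + 1) = 1 - m by ring, rpow_sub h1, rpow_one]
  have hg := (Gamma_pos_of_pos hm).ne'
  rw [div_pow]
  calc _ = exp (-(r * x / (1 - r))) * (r * x) ^ m / m.factorial *
        ((1 - r) ^ (-(2 * (m : ℝ) + a)) * (1 - r) ^ ((m : ℝ) + a + 1)) := by
        field_simp
    _ = _ := by rw [hp]; field_simp

/-- The one-dimensional Laguerre heat kernel has mass `1 - r`. -/
lemma lintegral_laguerreSeries {a x r : ℝ} (ha : -1 < a) (hx : 0 < x)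
    (hr : r ∈ Ioo (0 : ℝ) 1) :
    ∫⁻ y in Ioi 0, laguerreSeries a x r y = ENNReal.ofReal (1 - r) := by
  have h1 : 0 < 1 - r := sub_pos.2 hr.2
  have h0 := hr.1
  unfold laguerreSeries
  rw [lintegral_tsum fun m => by unfold laguerreTerm; fun_prop]
  simp_rw [lintegral_laguerreTerm ha hx hr]
  have hs := (NormedSpace.expSeries_div_hasSum_exp (r * x / (1 - r))).mul_left
    ((1 - r) * exp (-(r * x / (1 - r))))
  rw [← ENNReal.ofReal_tsum_of_nonneg (fun m => by positivity) hs.summable, hs.tsum_eq,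
    ← Real.exp_eq_exp_ℝ, mul_assoc, ← exp_add, neg_add_cancel, exp_zero, mul_one]

lemma integrable_laguerreSeries_toReal {a x r : ℝ} (ha : -1 < a) (hx : 0 < x)
    (hr : r ∈ Ioo (0 : ℝ) 1) :
    Integrable (fun y => (laguerreSeries a x r y).toReal) (volume.restrict (Ioi 0)) :=
  integrable_toReal_of_lintegral_ne_top
    (measurable_laguerreSeries_right a x r).aemeasurable
    (by rw [lintegral_laguerreSeries ha hx hr]; exact ENNReal.ofReal_ne_top)

lemma integral_laguerreSeries_toReal {a x r : ℝ} (ha : -1 < a) (hx : 0 < x)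
    (hr : r ∈ Ioo (0 : ℝ) 1) :
    ∫ y in Ioi 0, (laguerreSeries a x r y).toReal = 1 - r := by
  have hm := measurable_laguerreSeries_right a x r
  rw [integral_toReal hm.aemeasurable
    (ae_lt_top hm (by rw [lintegral_laguerreSeries ha hx hr]; exact ENNReal.ofReal_ne_top)),
    lintegral_laguerreSeries ha hx hr, ENNReal.toReal_ofReal (sub_pos.2 hr.2).le]

/-- The density, in the variable `r = exp (-s)`, of the subordination of the Poisson semigroup
to the heat semigroup. -/
noncomputable def subordinationWeight (t r : ℝ) : ℝ :=
  t * exp (t ^ 2 / (4 * log r)) / (-log r) ^ ((3 : ℝ) / 2) / r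

lemma image_exp_neg_div_Ioi {c : ℝ} (hc : 0 < c) :
    image (fun v => exp (-(c / v))) (Ioi 0) = Ioo 0 1 := by
  ext r
  constructor
  · rintro ⟨v, hv, rfl⟩
    exact ⟨exp_pos _, exp_lt_one_iff.2 (neg_lt_zero.2 (div_pos hc hv))⟩
  · rintro ⟨h0, h1⟩
    have hl := log_neg h0 h1
    refine ⟨c / -log r, div_pos hc (neg_pos.2 hl), ?_⟩
    simp only [div_div_cancel₀ hc.ne', neg_neg, exp_log h0]

lemma injOn_exp_neg_div {c : ℝ} (hc : 0 < c) : InjOn (fun v => exp (-(c / v))) (Ioi 0) := by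
  intro v _ w _ h
  simpa [div_eq_mul_inv, hc.ne'] using h

lemma hasDerivAt_exp_neg_div (c : ℝ) {v : ℝ} (hv : 0 < v) :
    HasDerivAt (fun v => exp (-(c / v))) (exp (-(c / v)) * (c / v ^ 2)) v := by
  have h := (((hasDerivAt_inv hv.ne').const_mul c).neg).exp
  simp only [Pi.neg_apply, ← div_eq_mul_inv] at h
  convert h using 1
  field_simp

lemma abs_deriv_smul_subordinationWeight {t v : ℝ} (ht : 0 < t) (hv : 0 < v) :
    |exp (-(t ^ 2 / 4 / v)) * (t ^ 2 / 4 / v ^ 2)| •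
      subordinationWeight t (exp (-(t ^ 2 / 4 / v))) =
        2 * (exp (-v) * v ^ ((1 / 2 : ℝ) - 1)) := by
  rw [abs_of_pos (by positivity), smul_eq_mul, subordinationWeight, log_exp, neg_neg]
  have h1 : t ^ 2 / (4 * -(t ^ 2 / 4 / v)) = -v := by field_simp
  have h2 : (t ^ 2 / 4 / v) ^ ((3 : ℝ) / 2) = (t / 2) ^ 3 / (v * v ^ (1 / 2 : ℝ)) := by
    rw [show t ^ 2 / 4 / v = (t / 2) ^ 2 / v by ring, div_rpow (by positivity) hv.le,
      ← rpow_natCast (t / 2) 2, ← rpow_mul (by positivity), ← rpow_natCast (t / 2) 3]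
    congr 1
    · norm_num
    · nth_rewrite 2 [← rpow_one v]
      rw [← rpow_add hv]
      norm_num
  rw [h1, h2, rpow_sub hv, rpow_one]
  have := (rpow_pos_of_pos hv (1 / 2)).ne'
  field_simp
  norm_num

lemma integrableOn_subordinationWeight {t : ℝ} (ht : 0 < t) :
    IntegrableOn (subordinationWeight t) (Ioo 0 1) := by
  have hc : 0 < t ^ 2 / 4 := by positivity
  rw [← image_exp_neg_div_Ioi hc, integrableOn_image_iff_integrableOn_abs_deriv_smul
    measurableSet_Ioi (fun v hv => (hasDerivAt_exp_neg_div _ hv).hasDerivWithinAt)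
    (injOn_exp_neg_div hc)]
  exact IntegrableOn.congr_fun ((GammaIntegral_convergent one_half_pos).const_mul 2)
    (fun v hv => (abs_deriv_smul_subordinationWeight ht hv).symm) measurableSet_Ioi

lemma integral_subordinationWeight {t : ℝ} (ht : 0 < t) :
    ∫ r in Ioo 0 1, subordinationWeight t r = 2 * √π := by
  have hc : 0 < t ^ 2 / 4 := by positivity
  rw [← image_exp_neg_div_Ioi hc, integral_image_eq_integral_abs_deriv_smul
    measurableSet_Ioi (fun v hv => (hasDerivAt_exp_neg_div _ hv).hasDerivWithinAt)
    (injOn_exp_neg_div hc), setIntegral_congr_fun measurableSet_Ioi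
    (fun v hv => abs_deriv_smul_subordinationWeight ht hv), integral_const_mul,
    ← Gamma_eq_integral one_half_pos, Gamma_one_half_eq]

/-- The integrand of the Poisson–Laguerre kernel, written with the series of the heat kernels. -/
noncomputable def plIntegrand (d : ℕ) (α : Fin d → ℝ) (t : ℝ) (x : Fin d → ℝ)
    (r : ℝ) (y : Fin d → ℝ) : ℝ :=
  subordinationWeight t r / (1 - r) ^ d * ∏ j, (laguerreSeries (α j) (x j) r (y j)).toReal

lemma measurable_plIntegrand (d : ℕ) (α : Fin d → ℝ) (t : ℝ) (x : Fin d → ℝ) :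
    Measurable (Function.uncurry (plIntegrand d α t x)) := by
  unfold Function.uncurry plIntegrand subordinationWeight
  refine Measurable.mul (by fun_prop) (Finset.measurable_fun_prod _ fun j _ => ?_)
  exact ((measurable_laguerreSeries (α j) (x j)).comp
    (measurable_fst.prodMk ((measurable_pi_apply j).comp measurable_snd))).ennreal_toReal

lemma plIntegrand_nonneg {d : ℕ} {α : Fin d → ℝ} {t : ℝ} (ht : 0 < t) {x : Fin d → ℝ}
    {r : ℝ} (hr : r ∈ Ioo (0 : ℝ) 1) (y : Fin d → ℝ) : 0 ≤ plIntegrand d α t x r y := by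
  have h1 : 0 < 1 - r := sub_pos.2 hr.2
  have h0 := hr.1
  have hl : 0 < -log r := neg_pos.2 (log_neg hr.1 hr.2)
  refine mul_nonneg ?_ (Finset.prod_nonneg fun _ _ => ENNReal.toReal_nonneg)
  unfold subordinationWeight
  positivity

lemma volume_restrict_posOrthant (d : ℕ) :
    (volume : Measure (Fin d → ℝ)).restrict (posOrthant d) =
      Measure.pi fun _ => volume.restrict (Ioi 0) :=
  Measure.restrict_pi_pi _ _

lemma integrable_plIntegrand_right {d : ℕ} {α : Fin d → ℝ} (hα : ∀ j, -1 < α j) (t : ℝ)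
    {x : Fin d → ℝ} (hx : ∀ j, 0 < x j) {r : ℝ} (hr : r ∈ Ioo (0 : ℝ) 1) :
    Integrable (plIntegrand d α t x r) (volume.restrict (posOrthant d)) := by
  rw [volume_restrict_posOrthant]
  exact (Integrable.fintype_prod_dep fun j =>
    integrable_laguerreSeries_toReal (hα j) (hx j) hr).const_mul _

lemma integral_plIntegrand_right {d : ℕ} {α : Fin d → ℝ} (hα : ∀ j, -1 < α j) (t : ℝ)
    {x : Fin d → ℝ} (hx : ∀ j, 0 < x j) {r : ℝ} (hr : r ∈ Ioo (0 : ℝ) 1) :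
    ∫ y in posOrthant d, plIntegrand d α t x r y = subordinationWeight t r := by
  rw [volume_restrict_posOrthant]
  unfold plIntegrand
  rw [integral_const_mul,
    integral_fintype_prod_eq_prod (fun j y => (laguerreSeries (α j) (x j) r y).toReal),
    Finset.prod_congr rfl fun j _ => integral_laguerreSeries_toReal (hα j) (hx j) hr,
    Finset.prod_const, Finset.card_univ, Fintype.card_fin,
    div_mul_cancel₀ _ (pow_pos (sub_pos.2 hr.2) d).ne']

lemma integrable_plIntegrand {d : ℕ} {α : Fin d → ℝ} (hα : ∀ j, -1 < α j) {t : ℝ} (ht : 0 < t)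
    {x : Fin d → ℝ} (hx : ∀ j, 0 < x j) :
    Integrable (Function.uncurry (plIntegrand d α t x))
      ((volume.restrict (Ioo 0 1)).prod (volume.restrict (posOrthant d))) := by
  rw [integrable_prod_iff (measurable_plIntegrand d α t x).aestronglyMeasurable]
  refine ⟨(ae_restrict_iff' measurableSet_Ioo).2
    (.of_forall fun r hr => integrable_plIntegrand_right hα t hx hr), ?_⟩
  refine IntegrableOn.congr_fun (integrableOn_subordinationWeight ht) (fun r hr => ?_)
    measurableSet_Ioo
  simp only [Function.uncurry_apply_pair, norm_of_nonneg (plIntegrand_nonneg ht hr _)]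
  exact (integral_plIntegrand_right hα t hx hr).symm

lemma plKernel_eq_integral_plIntegrand {d : ℕ} {α : Fin d → ℝ} (hα : ∀ j, -1 < α j) (t : ℝ)
    {x y : Fin d → ℝ} (hx : ∀ j, 0 < x j) (hy : ∀ j, 0 < y j) :
    plKernel d α t x y = 1 / (2 * √π) * ∫ r in Ioo 0 1, plIntegrand d α t x r y := by
  unfold plKernel
  congr 1
  refine setIntegral_congr_fun measurableSet_Ioo fun r hr => ?_
  simp only [plIntegrand, subordinationWeight,
    laguerre_kernel_eq_toReal (hα _) (hx _) hr (hy _)]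
  ring

theorem laguerre_poisson_kernel_total_mass_one
    (d : ℕ) (hd : 1 ≤ d) (α : Fin d → ℝ) (hα : ∀ j, -1 < α j) :
    ∀ t > (0 : ℝ), ∀ x ∈ posOrthant d,
      (∫ y in posOrthant d, plKernel d α t x y) = 1 := by
  intro t ht x hx
  have hx' : ∀ j, 0 < x j := fun j => hx j (mem_univ j)
  have hmeas : MeasurableSet (posOrthant d) :=
    MeasurableSet.univ_pi fun _ => measurableSet_Ioi
  rw [setIntegral_congr_fun hmeas fun y hy =>
      plKernel_eq_integral_plIntegrand hα t hx' fun j => hy j (mem_univ j),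
    integral_const_mul, ← integral_integral_swap (integrable_plIntegrand hα ht hx'),
    setIntegral_congr_fun measurableSet_Ioo fun r hr =>
      integral_plIntegrand_right hα t hx' hr,
    integral_subordinationWeight ht]
  exact one_div_mul_cancel (by positivity)
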